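/- There exists a positive constant β3 such that, with μ2 and β4 the thresholds of the seed-variance lemma, if μ < μ2, D² μ♭ ≤ 1/2 and β > max{β0, β3, β4, 6 e^{C̃} β° r²(r+1), √(3/2)}, then the truncated adiabatic invariant Φ = Φ^{(r)} satisfies σ²[Φ] ≥ (N/β²) · Ω²/10. -/

import Mathlib

open MeasureTheory

/-- Phase space `ℝ^{2N}` of the chain: `z = (x, y)`. -/
abbrev Phase (N : ℕ) := (Fin N → ℝ) × (Fin N → ℝ)

/-- Klein–Gordon chain Hamiltonian
`H(x,y) = (1/2) Σ_j [y_j² + x_j² + a(x_j − x_{j−1})² + (1/2) x_j⁴]`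
with periodic boundary conditions. -/
noncomputable def Ham (N : ℕ) (a : ℝ) (z : Phase N) : ℝ :=
  (1 / 2) * ∑ j : Fin N,
    ((z.2 j) ^ 2 + (z.1 j) ^ 2 + a * (z.1 j - z.1 ((finRotate N).symm j)) ^ 2 +
      (1 / 2) * (z.1 j) ^ 4)

/-- Gibbs measure `dm = e^{−βH} dz / Z(β,a)`. -/
noncomputable def gibbs (N : ℕ) (a β : ℝ) : Measure (Phase N) :=
  (ENNReal.ofReal (∫ z : Phase N, Real.exp (-β * Ham N a z)))⁻¹ •
    MeasureTheory.volume.withDensity fun z => ENNReal.ofReal (Real.exp (-β * Ham N a z))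

/-- Phase average `⟨X⟩ = ∫ X dm`. -/
noncomputable def pAvg (N : ℕ) (a β : ℝ) (X : Phase N → ℝ) : ℝ := ∫ z, X z ∂ gibbs N a β

/-- Phase variance `σ²[X] = ⟨X²⟩ − ⟨X⟩²`. -/
noncomputable def pVar (N : ℕ) (a β : ℝ) (X : Phase N → ℝ) : ℝ :=
  pAvg N a β (fun z => X z ^ 2) - (pAvg N a β X) ^ 2


open MvPolynomial


/-- Polynomials in the `2N` phase-space variables `x_0,…,x_{N−1},y_0,…,y_{N−1}`:
`Sum.inl l` is the variable `x_l` and `Sum.inr l` is `y_l`. -/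
abbrev Pol (N : ℕ) := MvPolynomial (Fin N ⊕ Fin N) ℝ

/-- Poisson bracket `{f,g} = Σ_l (∂f/∂x_l ∂g/∂y_l − ∂f/∂y_l ∂g/∂x_l)`. -/
noncomputable def pbracket {N : ℕ} (f g : Pol N) : Pol N :=
  ∑ l : Fin N,
    (pderiv (Sum.inl l) f * pderiv (Sum.inr l) g -
      pderiv (Sum.inr l) f * pderiv (Sum.inl l) g)

/-- Polynomial norm: the sum of the absolute values of the coefficients. -/
noncomputable def pnorm {N : ℕ} (f : Pol N) : ℝ :=
  ∑ d ∈ f.support, |coeff d f|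

/-- Action of the cyclic permutation `τ` on polynomials: `(τ f)(x,y) = f(τx, τy)`,
where `(τ x)_j = x_{j+1 mod N}`. -/
noncomputable def cshiftP {N : ℕ} (f : Pol N) : Pol N :=
  rename (Sum.map (finRotate N : Fin N → Fin N) (finRotate N : Fin N → Fin N)) f

/-- The extensive function generated by a seed: `f^⊕ = Σ_{l=1}^N τ^l f`. -/
noncomputable def oplus {N : ℕ} (f : Pol N) : Pol N :=
  ∑ l ∈ Finset.Icc 1 N, cshiftP^[l] f

/-- Set of sites appearing (in `x` or `y`) with nonzero exponent in a monomial. -/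
def siteSupport {N : ℕ} (d : (Fin N ⊕ Fin N) →₀ ℕ) : Finset (Fin N) :=
  Finset.univ.filter fun l => d (Sum.inl l) ≠ 0 ∨ d (Sum.inr l) ≠ 0

/-- `f` is left aligned with interaction range at most `m`: every monomial of `f`
involves only the sites `0,…,m`. -/
def RangeLE {N : ℕ} (m : ℕ) (f : Pol N) : Prop :=
  ∀ d ∈ f.support, ∀ l ∈ siteSupport d, (l : ℕ) ≤ m

/-- `F` is a decomposition `f = Σ_{m≥0} f^{(m)}` of the seed `f` into left-aligned
components of increasing interaction range (truncated at `m = N` on the periodic chain). -/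
def IsDecomp {N : ℕ} (f : Pol N) (F : ℕ → Pol N) : Prop :=
  f = ∑ m ∈ Finset.range (N + 1), F m ∧ ∀ m, RangeLE m (F m)

/-- Exponential decay `‖f^{(m)}‖ ≤ C e^{−σm}` of the components of a decomposition. -/
def Decay {N : ℕ} (C σ : ℝ) (F : ℕ → Pol N) : Prop :=
  ∀ m : ℕ, pnorm (F m) ≤ C * Real.exp (-σ * m)

/-- A seed `f` is of class `D(C,σ)` if it admits a decomposition `f = Σ_m f^{(m)}`
into left-aligned components of interaction range at most `m` with `‖f^{(m)}‖ ≤ C e^{−σm}`. -/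
def SeedClassD {N : ℕ} (C σ : ℝ) (f : Pol N) : Prop :=
  ∃ F : ℕ → Pol N, IsDecomp f F ∧ Decay C σ F


/-- Gibbs average of (the evaluation of) a polynomial. -/
noncomputable def gAvg (N : ℕ) (a β : ℝ) (f : Pol N) : ℝ :=
  pAvg N a β fun z => MvPolynomial.eval (Sum.elim z.1 z.2) f

/-- `μ := a/(1+2a)`. -/
noncomputable def muKG (a : ℝ) : ℝ := a / (1 + 2 * a)

/-- `σ0 := −ln(2μ)`. -/
noncomputable def sigma0 (a : ℝ) : ℝ := -Real.log (2 * muKG a)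

/-- `σ* := σ0/4` and `μ♭ := e^{−σ*}`. -/
noncomputable def muflat (a : ℝ) : ℝ := Real.exp (-(sigma0 a / 4))

/-- `A2 := √(1−2a)`. -/
noncomputable def A2c (a : ℝ) : ℝ := Real.sqrt (1 - 2 * a)

/-- `D := K1 √(1+4a)/(1 − 3/(4β²))`. -/
noncomputable def Dc (K1 a β : ℝ) : ℝ := K1 * Real.sqrt (1 + 4 * a) / (1 - 3 / (4 * β ^ 2))

/-- `K2 := 4(2K1)^{2+8a0}/((1−2a0)⁴(1−a0)⁶)`. -/
noncomputable def K2c (K1 a0 : ℝ) : ℝ :=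
  4 * (2 * K1) ^ ((2 : ℝ) + 8 * a0) / ((1 - 2 * a0) ^ 4 * (1 - a0) ^ 6)

/-- `K3 := 2⁸ K1⁴ K2`. -/
noncomputable def K3c (K1 a0 : ℝ) : ℝ := 2 ^ 8 * K1 ^ 4 * K2c K1 a0

/-- `K4 := K3 · 3³ e⁶ Ω⁶/(2⁹ C1²)`. -/
noncomputable def K4c (K1 a0 Ω C1 : ℝ) : ℝ :=
  K3c K1 a0 * 3 ^ 3 * Real.exp 6 * Ω ^ 6 / (2 ^ 9 * C1 ^ 2)

/-- `β° := 2⁶ e^{C̃−1} C1/((1−μ♭²)(1−μ♭) A2² Ω)`. -/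
noncomputable def betaCirc (a Ct C1 Ω : ℝ) : ℝ :=
  2 ^ 6 * Real.exp (Ct - 1) * C1 /
    ((1 - muflat a ^ 2) * (1 - muflat a) * A2c a ^ 2 * Ω)

/-- The decay-of-correlations estimate (Proposition on the decay of correlations)
for the constants `a0, β0, K1`. -/
def CorrEstimate (a0 β0 K1 : ℝ) : Prop :=
  ∀ (N : ℕ) (a β : ℝ) (r s : ℕ) (φ ψ : Pol N) (p q t u : ℕ),
    0 < a → a < a0 → β0 < β →
    φ.IsHomogeneous (2 * r) → ψ.IsHomogeneous (2 * s) →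
    p ≤ q → q < t → t ≤ u → u < N →
    (∀ dm ∈ φ.support, ∀ l ∈ siteSupport dm, p ≤ (l : ℕ) ∧ (l : ℕ) ≤ q) →
    (∀ dm ∈ ψ.support, ∀ l ∈ siteSupport dm, t ≤ (l : ℕ) ∧ (l : ℕ) ≤ u) →
    |gAvg N a β (φ * ψ) - gAvg N a β φ * gAvg N a β ψ| ≤
      K2c K1 a0 *
      Dc K1 a β ^ ((q - p) + (u - t) + 2 * min (t - q - 1) (N - u + p - 1) + 4) *
      (a * (2 + a)) ^ (min (t - q - 1) (N - u + p - 1)) *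
      ((2 : ℝ) ^ (r + s) * (r.factorial : ℝ) * (s.factorial : ℝ) /
        ((1 - 2 * a) * β) ^ (r + s)) *
      pnorm φ * pnorm ψ

/-- The Gibbs-moment estimate for extensive homogeneous polynomials of short range
(consequence of the monomial-average Proposition) for the constants `a0, β0, K1`. -/
def MomEstimate (a0 β0 K1 : ℝ) : Prop :=
  ∀ (N : ℕ) (a β : ℝ) (r' l' : ℕ) (f : Pol N),
    0 < a → a < a0 → β0 < β →
    f.IsHomogeneous (2 * r') →
    (∀ dm ∈ f.support, ∀ l ∈ siteSupport dm, (l : ℕ) ≤ l') → l' < N →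
    gAvg N a β (f * f) ≤
      (2 * K1) ^ ((1 : ℝ) + 4 * a0) / A2c a ^ (4 + 4 * r') *
      Dc K1 a β ^ (2 + l') * (2 / β) ^ (2 * r') * ((2 * r').factorial : ℝ) *
      pnorm f ^ 2

/-! ### Gaussian moments and integrability -/

theorem kg_int1 {β : ℝ} (hβ : 0 < β) (k : ℕ) :
    Integrable (fun t : ℝ => t ^ k * Real.exp (-(β / 2) * t ^ 2)) := by
  have h := integrable_rpow_mul_exp_neg_mul_sq (b := β / 2) (by positivity) (s := (k : ℝ))
    (by have : (0 : ℝ) ≤ k := Nat.cast_nonneg k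
        linarith)
  simpa [Real.rpow_natCast] using h

theorem kg_moment {β : ℝ} (hβ : 0 < β) (k : ℕ) :
    ∫ t : ℝ, t ^ (k + 2) * Real.exp (-(β / 2) * t ^ 2) =
      ((k : ℝ) + 1) / β * ∫ t : ℝ, t ^ k * Real.exp (-(β / 2) * t ^ 2) := by
  have hd : ∀ t : ℝ, HasDerivAt (fun t : ℝ => t ^ (k + 1) * Real.exp (-(β / 2) * t ^ 2))
      (((k : ℝ) + 1) * (t ^ k * Real.exp (-(β / 2) * t ^ 2)) -
        β * (t ^ (k + 2) * Real.exp (-(β / 2) * t ^ 2))) t := by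
    intro t
    have h1 := hasDerivAt_pow (k + 1) t
    have h2 : HasDerivAt (fun t : ℝ => Real.exp (-(β / 2) * t ^ 2))
        (Real.exp (-(β / 2) * t ^ 2) * (-(β / 2) * (2 * t))) t := by
      have h3 := ((hasDerivAt_pow 2 t).const_mul (-(β / 2))).exp
      simpa using h3
    refine (h1.mul h2).congr_deriv ?_
    push_cast
    ring
  have hi := integral_eq_zero_of_hasDerivAt_of_integrable hd
    (((kg_int1 hβ k).const_mul _).sub ((kg_int1 hβ (k + 2)).const_mul _)) (kg_int1 hβ (k + 1))
  rw [integral_sub ((kg_int1 hβ k).const_mul _) ((kg_int1 hβ (k + 2)).const_mul _),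
    integral_const_mul, integral_const_mul] at hi
  rw [div_mul_eq_mul_div, eq_div_iff hβ.ne']
  linarith

/-- The configurational part of the Hamiltonian. -/
noncomputable def kgV (N : ℕ) (a : ℝ) (x : Fin N → ℝ) : ℝ :=
  (1 / 2) * ∑ j : Fin N,
    ((x j) ^ 2 + a * (x j - x ((finRotate N).symm j)) ^ 2 + (1 / 2) * (x j) ^ 4)

theorem kg_expHam (N : ℕ) (a β : ℝ) (z : Phase N) :
    Real.exp (-β * Ham N a z) =
      Real.exp (-β * kgV N a z.1) * ∏ j, Real.exp (-(β / 2) * (z.2 j) ^ 2) := by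
  rw [← Real.exp_sum, ← Real.exp_add]
  congr 1
  unfold Ham kgV
  rw [← Finset.mul_sum, Finset.mul_sum, Finset.mul_sum, Finset.mul_sum, Finset.mul_sum, Finset.mul_sum,
    ← Finset.sum_add_distrib]
  refine Finset.sum_congr rfl fun j _ => ?_
  ring

/-- The weight of a pure monomial. -/
theorem kg_evalmon (N : ℕ) (a β : ℝ) (z : Phase N) (d : (Fin N ⊕ Fin N) →₀ ℕ) (c : ℝ) :
    MvPolynomial.eval (Sum.elim z.1 z.2) (monomial d c) * Real.exp (-β * Ham N a z) =
      (c * ((∏ j, (z.1 j) ^ (d (Sum.inl j))) * Real.exp (-β * kgV N a z.1))) *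
        ∏ j, ((z.2 j) ^ (d (Sum.inr j)) * Real.exp (-(β / 2) * (z.2 j) ^ 2)) := by
  rw [kg_expHam, eval_monomial, Finsupp.prod_fintype _ _ (by simp), Fintype.prod_sum_type,
    Finset.prod_mul_distrib]
  simp only [Sum.elim_inl, Sum.elim_inr]
  ring

theorem kg_intx (N : ℕ) {a β : ℝ} (ha : 0 < a) (hβ : 0 < β) (α : Fin N → ℕ) :
    Integrable (fun x : Fin N → ℝ => (∏ j, (x j) ^ (α j)) * Real.exp (-β * kgV N a x)) := by
  have h1 : Integrable (fun x : Fin N → ℝ =>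
      ∏ j, ((x j) ^ (α j) * Real.exp (-(β / 2) * (x j) ^ 2))) :=
    Integrable.fintype_prod (f := fun j t => t ^ (α j) * Real.exp (-(β / 2) * t ^ 2))
      (fun j => kg_int1 hβ (α j))
  refine h1.mono ?_ (Filter.Eventually.of_forall fun x => ?_)
  · apply Continuous.aestronglyMeasurable
    unfold kgV
    fun_prop
  · rw [Finset.prod_mul_distrib, norm_mul, norm_mul]
    gcongr
    rw [Real.norm_eq_abs, Real.norm_eq_abs, Real.abs_exp, ← Real.exp_sum, Real.abs_exp]
    apply Real.exp_le_exp.2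
    unfold kgV
    rw [← mul_assoc, Finset.mul_sum]
    refine Finset.sum_le_sum fun j _ => ?_
    have h2 : 0 ≤ β * (a * (x j - x ((finRotate N).symm j)) ^ 2) := by positivity
    have h3 : 0 ≤ β * (x j) ^ 4 := by positivity
    nlinarith

theorem kg_integrable_mon (N : ℕ) {a β : ℝ} (ha : 0 < a) (hβ : 0 < β)
    (d : (Fin N ⊕ Fin N) →₀ ℕ) (c : ℝ) :
    Integrable (fun z : Phase N =>
      MvPolynomial.eval (Sum.elim z.1 z.2) (monomial d c) * Real.exp (-β * Ham N a z)) := by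
  simp only [kg_evalmon]
  exact Integrable.mul_prod
    (f := fun x : Fin N → ℝ => c * ((∏ j, (x j) ^ (d (Sum.inl j))) * Real.exp (-β * kgV N a x)))
    (g := fun y : Fin N → ℝ => ∏ j, ((y j) ^ (d (Sum.inr j)) * Real.exp (-(β / 2) * (y j) ^ 2)))
    ((kg_intx N ha hβ _).const_mul c)
    (Integrable.fintype_prod
      (f := fun j t => t ^ (d (Sum.inr j)) * Real.exp (-(β / 2) * t ^ 2))
      (fun j => kg_int1 hβ _))

theorem kg_integrable (N : ℕ) {a β : ℝ} (ha : 0 < a) (hβ : 0 < β) (p : Pol N) :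
    Integrable (fun z : Phase N =>
      MvPolynomial.eval (Sum.elim z.1 z.2) p * Real.exp (-β * Ham N a z)) := by
  induction p using MvPolynomial.induction_on' with
  | monomial d c => exact kg_integrable_mon N ha hβ d c
  | add p q hp hq =>
    simp only [map_add, add_mul]
    exact hp.add hq

/-- The unnormalised average. -/
noncomputable def kgI (N : ℕ) (a β : ℝ) (p : Pol N) : ℝ :=
  ∫ z : Phase N, MvPolynomial.eval (Sum.elim z.1 z.2) p * Real.exp (-β * Ham N a z)

theorem kgI_add (N : ℕ) {a β : ℝ} (ha : 0 < a) (hβ : 0 < β) (p q : Pol N) :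
    kgI N a β (p + q) = kgI N a β p + kgI N a β q := by
  unfold kgI
  simp only [map_add, add_mul]
  exact integral_add (kg_integrable N ha hβ p) (kg_integrable N ha hβ q)

theorem kgI_smul (N : ℕ) (a β c : ℝ) (p : Pol N) :
    kgI N a β (c • p) = c * kgI N a β p := by
  unfold kgI
  simp only [smul_eval, mul_assoc]
  exact integral_const_mul _ _

theorem kgI_one_pos (N : ℕ) {a β : ℝ} (ha : 0 < a) (hβ : 0 < β) : 0 < kgI N a β 1 := by
  have h := kg_integrable N ha hβ (1 : Pol N)
  unfold kgI
  simp only [map_one, one_mul] at h ⊢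
  exact integral_exp_pos h

theorem kgI_mon (N : ℕ) (a β : ℝ) (d : (Fin N ⊕ Fin N) →₀ ℕ) (c : ℝ) :
    kgI N a β (monomial d c) =
      (∫ x : Fin N → ℝ, c * ((∏ j, (x j) ^ (d (Sum.inl j))) * Real.exp (-β * kgV N a x))) *
        ∏ j, ∫ t : ℝ, t ^ (d (Sum.inr j)) * Real.exp (-(β / 2) * t ^ 2) := by
  unfold kgI
  simp only [kg_evalmon]
  rw [← integral_fintype_prod_volume_eq_prod
    (f := fun j t => t ^ (d (Sum.inr j)) * Real.exp (-(β / 2) * t ^ 2))]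
  exact integral_prod_mul
    (f := fun x : Fin N → ℝ => c * ((∏ j, (x j) ^ (d (Sum.inl j))) * Real.exp (-β * kgV N a x)))
    (g := fun y : Fin N → ℝ => ∏ j, ((y j) ^ (d (Sum.inr j)) * Real.exp (-(β / 2) * (y j) ^ 2)))

theorem kgI_ysq (N : ℕ) {a β : ℝ} (hβ : 0 < β) (j : Fin N)
    (d : (Fin N ⊕ Fin N) →₀ ℕ) (c : ℝ) :
    kgI N a β ((X (Sum.inr j)) ^ 2 * monomial d c) =
      ((d (Sum.inr j) : ℝ) + 1) / β * kgI N a β (monomial d c) := by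
  have h : (X (Sum.inr j)) ^ 2 * monomial d c =
      (monomial (Finsupp.single (Sum.inr j) 2 + d) c : Pol N) := by
    rw [X_pow_eq_monomial, monomial_mul, one_mul]
  rw [h, kgI_mon, kgI_mon, ← Finset.mul_prod_erase _ _ (Finset.mem_univ j),
    ← Finset.mul_prod_erase (a := j) Finset.univ
      (fun j => ∫ t : ℝ, t ^ (d (Sum.inr j)) * Real.exp (-(β / 2) * t ^ 2)) (Finset.mem_univ j)]
  have h1 : (Finsupp.single (Sum.inr j : Fin N ⊕ Fin N) 2 + d : (Fin N ⊕ Fin N) →₀ ℕ) (Sum.inr j)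
      = d (Sum.inr j) + 2 := by simp [add_comm]
  have h2 : ∀ i, (Finsupp.single (Sum.inr j : Fin N ⊕ Fin N) 2 + d : (Fin N ⊕ Fin N) →₀ ℕ) (Sum.inl i)
      = d (Sum.inl i) := by simp
  have h3 : ∀ i ∈ Finset.univ.erase j,
      (∫ t : ℝ, t ^ ((Finsupp.single (Sum.inr j : Fin N ⊕ Fin N) 2 + d : (Fin N ⊕ Fin N) →₀ ℕ) (Sum.inr i)) *
        Real.exp (-(β / 2) * t ^ 2)) = ∫ t : ℝ, t ^ (d (Sum.inr i)) *
        Real.exp (-(β / 2) * t ^ 2) := by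
    intro i hi
    have : j ≠ i := fun h => by simp [h] at hi
    simp [this]
  rw [Finset.prod_congr rfl h3, h1, kg_moment hβ]
  simp only [h2]
  ring

theorem kgI_shift (N : ℕ) (a β : ℝ) (p : Pol N) : kgI N a β (cshiftP p) = kgI N a β p := by
  let e : (Fin N → ℝ) ≃ᵐ (Fin N → ℝ) :=
    MeasurableEquiv.arrowCongr' (finRotate N).symm (MeasurableEquiv.refl ℝ)
  have he : MeasurePreserving e volume volume :=
    volume_preserving_arrowCongr' _ _ (MeasurePreserving.id _)
  have hee : MeasurePreserving (MeasurableEquiv.prodCongr e e) (volume : Measure (Phase N)) volume :=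
    he.prod he
  have hex : ∀ (x : Fin N → ℝ) (j : Fin N), e x j = x (finRotate N j) := fun x j => rfl
  unfold kgI
  conv_rhs => rw [← hee.integral_comp']
  refine integral_congr_ae (Filter.Eventually.of_forall fun z => ?_)
  have hz1 : (MeasurableEquiv.prodCongr e e z).1 = e z.1 := rfl
  have hz2 : (MeasurableEquiv.prodCongr e e z).2 = e z.2 := rfl
  have h1 : Ham N a (MeasurableEquiv.prodCongr e e z) = Ham N a z := by
    unfold Ham
    rw [hz1, hz2]
    congr 1
    simp only [hex]
    rw [← Equiv.sum_comp (finRotate N) (fun j => ((z.2 j) ^ 2 + (z.1 j) ^ 2 +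
      a * (z.1 j - z.1 ((finRotate N).symm j)) ^ 2 + (1 / 2) * (z.1 j) ^ 4))]
    simp only [Equiv.apply_symm_apply, Equiv.symm_apply_apply]
  simp only [h1]
  congr 1
  unfold cshiftP
  rw [eval_rename, hz1, hz2]
  congr 2
  funext i
  cases i <;> simp only [Function.comp_apply, Sum.map_inl, Sum.map_inr, Sum.elim_inl, Sum.elim_inr, hex]

theorem kg_gAvg (N : ℕ) {a β : ℝ} (ha : 0 < a) (hβ : 0 < β) (p : Pol N) :
    gAvg N a β p = kgI N a β p / kgI N a β 1 := by
  have hZ : ∫ z : Phase N, Real.exp (-β * Ham N a z) = kgI N a β 1 := by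
    unfold kgI; simp
  have hm : Measurable (fun z : Phase N => ENNReal.ofReal (Real.exp (-β * Ham N a z))) := by
    apply Measurable.ennreal_ofReal
    apply Continuous.measurable
    unfold Ham
    fun_prop
  unfold gAvg pAvg gibbs
  rw [hZ, integral_smul_measure, integral_withDensity_eq_integral_toReal_smul hm (by simp)]
  simp only [ENNReal.toReal_ofReal (Real.exp_pos _).le, smul_eq_mul, ENNReal.toReal_inv,
    ENNReal.toReal_ofReal (kgI_one_pos N ha hβ).le]
  rw [div_eq_inv_mul]
  congr 1
  unfold kgI
  simp only [mul_comm]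

/-! ### The average as a linear functional on polynomials -/

/-- The Gibbs average as a linear functional. -/
noncomputable def kgE (N : ℕ) {a β : ℝ} (ha : 0 < a) (hβ : 0 < β) : Pol N →ₗ[ℝ] ℝ where
  toFun p := gAvg N a β p
  map_add' p q := by rw [kg_gAvg N ha hβ, kg_gAvg N ha hβ, kg_gAvg N ha hβ, kgI_add N ha hβ, add_div]
  map_smul' c p := by
    rw [kg_gAvg N ha hβ, kg_gAvg N ha hβ, kgI_smul, RingHom.id_apply, smul_eq_mul, mul_div_assoc]

section functional
variable {N : ℕ} {a β : ℝ} (ha : 0 < a) (hβ : 0 < β)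

theorem kgE_apply (p : Pol N) : kgE N ha hβ p = gAvg N a β p := rfl

theorem kgE_one : kgE N ha hβ 1 = 1 := by
  rw [kgE_apply, kg_gAvg N ha hβ, div_self (kgI_one_pos N ha hβ).ne']

theorem kgE_nonneg (p : Pol N) : 0 ≤ kgE N ha hβ (p * p) := by
  rw [kgE_apply]
  unfold gAvg pAvg
  refine integral_nonneg fun z => ?_
  simp only [map_mul]
  exact mul_self_nonneg _

theorem kgE_shift (p : Pol N) : kgE N ha hβ (cshiftP p) = kgE N ha hβ p := by
  rw [kgE_apply, kgE_apply, kg_gAvg N ha hβ, kg_gAvg N ha hβ, kgI_shift]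

theorem kgE_ysq (j : Fin N) (d : (Fin N ⊕ Fin N) →₀ ℕ) (c : ℝ) :
    kgE N ha hβ ((X (Sum.inr j)) ^ 2 * monomial d c) =
      ((d (Sum.inr j) : ℝ) + 1) / β * kgE N ha hβ (monomial d c) := by
  rw [kgE_apply, kgE_apply, kg_gAvg N ha hβ, kg_gAvg N ha hβ, kgI_ysq N hβ, mul_div_assoc]

theorem kgE_ysq_one (j : Fin N) : kgE N ha hβ ((X (Sum.inr j)) ^ 2) = 1 / β := by
  have h := kgE_ysq ha hβ j 0 1
  have h1 : (monomial 0 1 : Pol N) = 1 := rfl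
  rw [h1, kgE_one] at h
  simpa using h

theorem kgE_sq_le (p : Pol N) : (kgE N ha hβ p) ^ 2 ≤ kgE N ha hβ (p * p) := by
  set m := kgE N ha hβ p with hm
  have h := kgE_nonneg ha hβ (p - m • 1)
  have h2 : (p - m • 1) * (p - m • 1) = p * p - (2 * m) • p + (m ^ 2) • (1 : Pol N) := by
    simp only [smul_eq_C_mul, map_mul, map_pow, map_ofNat]
    ring
  rw [h2, map_add, map_sub, map_smul, map_smul, kgE_one, ← hm] at h
  simp only [smul_eq_mul] at h
  nlinarith

/-- Total degree of a monomial in the momenta. -/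
noncomputable def kgdeg {N : ℕ} (d : (Fin N ⊕ Fin N) →₀ ℕ) : ℝ := ∑ j, (d (Sum.inr j) : ℝ)

/-- The Euler operator in the momenta. -/
noncomputable def kgY {N : ℕ} (p : Pol N) : Pol N :=
  ∑ d ∈ p.support, monomial d (kgdeg d * coeff d p)

theorem kgY_coeff (p : Pol N) (d : (Fin N ⊕ Fin N) →₀ ℕ) :
    coeff d (kgY p) = kgdeg d * coeff d p := by
  classical
  unfold kgY
  simp only [coeff_sum, coeff_monomial, Finset.sum_ite_eq', mem_support_iff]
  split_ifs with h
  · rfl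
  · simp only [not_not] at h
    rw [h, mul_zero]

theorem kgY_add (p q : Pol N) : kgY (p + q) = kgY p + kgY q := by
  ext d
  simp only [coeff_add, kgY_coeff, mul_add]

theorem kgY_zero : kgY (0 : Pol N) = 0 := by
  ext d
  simp [kgY_coeff]

theorem kgY_sum {ι : Type*} (s : Finset ι) (f : ι → Pol N) :
    kgY (∑ i ∈ s, f i) = ∑ i ∈ s, kgY (f i) := by
  ext d
  simp only [coeff_sum, kgY_coeff, Finset.mul_sum]

theorem kgY_monomial (d : (Fin N ⊕ Fin N) →₀ ℕ) (c : ℝ) :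
    kgY (monomial d c : Pol N) = kgdeg d • monomial d c := by
  classical
  ext e
  simp only [kgY_coeff, coeff_smul, coeff_monomial, smul_eq_mul]
  split_ifs with h
  · rw [h]
  · simp

/-- Twice the kinetic energy. -/
noncomputable def kgG (N : ℕ) : Pol N := ∑ j : Fin N, (X (Sum.inr j)) ^ 2

theorem kgE_G_mul (p : Pol N) :
    kgE N ha hβ (kgG N * p) = ((N : ℝ) * kgE N ha hβ p + kgE N ha hβ (kgY p)) / β := by
  induction p using MvPolynomial.induction_on' with
  | monomial d c =>
    unfold kgG
    rw [Finset.sum_mul, map_sum, kgY_monomial, map_smul]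
    simp only [kgE_ysq]
    rw [← Finset.sum_mul, ← Finset.sum_div, Finset.sum_add_distrib]
    unfold kgdeg
    simp only [Finset.sum_const, Finset.card_univ, Fintype.card_fin, nsmul_eq_mul, mul_one,
      smul_eq_mul]
    ring
  | add p q hp hq =>
    rw [mul_add, map_add, hp, hq, kgY_add, map_add, map_add]
    ring

theorem kgY_ysq (j : Fin N) : kgY ((X (Sum.inr j)) ^ 2 : Pol N) = (2 : ℝ) • (X (Sum.inr j)) ^ 2 := by
  classical
  rw [X_pow_eq_monomial, kgY_monomial]
  congr 1
  unfold kgdeg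
  rw [Finset.sum_eq_single j]
  · simp
  · intro i _ hi
    simp [Ne.symm hi]
  · simp

theorem kgY_xsq (j : Fin N) : kgY ((X (Sum.inl j)) ^ 2 : Pol N) = 0 := by
  classical
  rw [X_pow_eq_monomial, kgY_monomial]
  unfold kgdeg
  simp

theorem kgE_G : kgE N ha hβ (kgG N) = N / β := by
  have h := kgE_G_mul ha hβ (1 : Pol N)
  have h1 : kgY (1 : Pol N) = 0 := by
    have : (1 : Pol N) = monomial 0 1 := rfl
    rw [this, kgY_monomial]
    simp [kgdeg]
  rw [mul_one, kgE_one, h1, map_zero] at h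
  simpa using h

theorem kgE_GG : kgE N ha hβ (kgG N * kgG N) = (N : ℝ) * (N + 2) / β ^ 2 := by
  have h1 : kgY (kgG N) = (2 : ℝ) • kgG N := by
    unfold kgG
    rw [kgY_sum, Finset.smul_sum]
    simp only [kgY_ysq]
  rw [kgE_G_mul, h1, map_smul, kgE_G, smul_eq_mul]
  field_simp

theorem kg_shift_G : cshiftP (kgG N) = kgG N := by
  unfold cshiftP kgG
  rw [map_sum]
  simp only [map_pow, rename_X, Sum.map_inr]
  exact Equiv.sum_comp (finRotate N) (fun j => (X (Sum.inr j) : Pol N) ^ 2)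

theorem kg_shift_mul (p q : Pol N) : cshiftP (p * q) = cshiftP p * cshiftP q := by
  unfold cshiftP
  exact map_mul _ _ _

theorem kgE_iter (p : Pol N) (l : ℕ) : kgE N ha hβ (cshiftP^[l] p) = kgE N ha hβ p := by
  induction l with
  | zero => rfl
  | succ l ih => rw [Function.iterate_succ_apply', kgE_shift, ih]

theorem kgE_G_iter (p : Pol N) (l : ℕ) :
    kgE N ha hβ (kgG N * cshiftP^[l] p) = kgE N ha hβ (kgG N * p) := by
  induction l with
  | zero => rfl
  | succ l ih =>
    rw [Function.iterate_succ_apply']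
    nth_rewrite 1 [← kg_shift_G]
    rw [← kg_shift_mul, kgE_shift, ih]

theorem kg_var (hN : 0 < N) (p : Pol N) :
    (N : ℝ) * (kgE N ha hβ (kgY p)) ^ 2 / 2 ≤
      kgE N ha hβ (oplus p * oplus p) - (kgE N ha hβ (oplus p)) ^ 2 := by
  have hNr : (0 : ℝ) < N := by exact_mod_cast hN
  have hP : kgE N ha hβ (oplus p) = N * kgE N ha hβ p := by
    unfold oplus
    rw [map_sum]
    simp only [kgE_iter]
    simp
  have hGP : kgE N ha hβ (kgG N * oplus p) = N * kgE N ha hβ (kgG N * p) := by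
    unfold oplus
    rw [Finset.mul_sum, map_sum]
    simp only [kgE_G_iter]
    simp
  set P := oplus p with hPdef
  rw [kgE_G_mul ha hβ p] at hGP
  set u := kgE N ha hβ p
  set y := kgE N ha hβ (kgY p)
  set t := β * y / 2 with ht
  have h := kgE_sq_le ha hβ (P - t • kgG N)
  have h2 : (P - t • kgG N) * (P - t • kgG N) =
      P * P - (2 * t) • (kgG N * P) + (t ^ 2) • (kgG N * kgG N) := by
    simp only [smul_eq_C_mul, map_mul, map_pow, map_ofNat]
    ring
  rw [h2, map_add, map_sub, map_sub, map_smul, map_smul, map_smul, hGP, kgE_GG, kgE_G, hP] at h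
  rw [hP]
  simp only [smul_eq_mul] at h
  have e1 : 2 * t * (↑N * ((↑N * u + y) / β)) = N * y * (N * u + y) := by
    rw [ht]; field_simp
  have e2 : t ^ 2 * (↑N * (↑N + 2) / β ^ 2) = N * (N + 2) * y ^ 2 / 4 := by
    rw [ht]; field_simp; norm_num
  have e3 : t * (↑N / β) = N * y / 2 := by
    rw [ht]; field_simp
  rw [e1, e2, e3] at h
  nlinarith

end functional

/-! ### Estimates -/

theorem kg_pnorm_nonneg {N : ℕ} (f : Pol N) : 0 ≤ pnorm f :=
  Finset.sum_nonneg fun _ _ => abs_nonneg _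

theorem kg_pnorm_le {N : ℕ} (f g : Pol N) (k : ℝ)
    (h : ∀ d, |coeff d g| ≤ k * |coeff d f|) : pnorm g ≤ k * pnorm f := by
  unfold pnorm
  have hs : g.support ⊆ f.support := by
    intro d hd
    rw [mem_support_iff] at hd ⊢
    intro h0
    have := h d
    rw [h0, abs_zero, mul_zero] at this
    exact hd (abs_eq_zero.1 (le_antisymm this (abs_nonneg _)))
  calc ∑ d ∈ g.support, |coeff d g| ≤ ∑ d ∈ f.support, |coeff d g| :=
        Finset.sum_le_sum_of_subset_of_nonneg hs fun _ _ _ => abs_nonneg _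
    _ ≤ ∑ d ∈ f.support, k * |coeff d f| := Finset.sum_le_sum fun d _ => h d
    _ = k * ∑ d ∈ f.support, |coeff d f| := by rw [Finset.mul_sum]

theorem kgdeg_nonneg {N : ℕ} (d : (Fin N ⊕ Fin N) →₀ ℕ) : 0 ≤ kgdeg d :=
  Finset.sum_nonneg fun _ _ => Nat.cast_nonneg _

theorem kgdeg_le {N : ℕ} {f : Pol N} {n : ℕ} (hf : f.IsHomogeneous n)
    (d : (Fin N ⊕ Fin N) →₀ ℕ) (hd : coeff d f ≠ 0) : kgdeg d ≤ n := by
  have h := hf hd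
  have hw : Finsupp.weight 1 d = d.degree := (DFunLike.congr_fun Finsupp.degree_eq_weight_one d).symm
  rw [hw, Finsupp.degree_eq_sum, Fintype.sum_sum_type] at h
  unfold kgdeg
  rw [← h]
  push_cast
  have : (0 : ℝ) ≤ ∑ j : Fin N, (d (Sum.inl j) : ℝ) := Finset.sum_nonneg fun _ _ => Nat.cast_nonneg _
  linarith

theorem kgY_supp {N : ℕ} {f : Pol N} {d : (Fin N ⊕ Fin N) →₀ ℕ} (h : coeff d (kgY f) ≠ 0) :
    coeff d f ≠ 0 := by
  rw [kgY_coeff] at h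
  exact right_ne_zero_of_mul h

theorem kgY_pnorm {N : ℕ} {f : Pol N} {n : ℕ} (hf : f.IsHomogeneous n) :
    pnorm (kgY f) ≤ n * pnorm f := by
  refine kg_pnorm_le _ _ _ fun d => ?_
  rw [kgY_coeff, abs_mul, abs_of_nonneg (kgdeg_nonneg d)]
  by_cases h : coeff d f = 0
  · simp [h]
  · exact mul_le_mul_of_nonneg_right (kgdeg_le hf d h) (abs_nonneg _)

theorem kg_fact (n : ℕ) : ((2 * n).factorial : ℝ) ≤ (2 ^ n * (n.factorial : ℝ)) ^ 2 := by
  have h1 := Nat.choose_mul_factorial_mul_factorial (show n ≤ 2 * n by omega)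
  have h2 : 2 * n - n = n := by omega
  rw [h2] at h1
  have h3 := Nat.choose_le_two_pow (2 * n) n
  have h4 : (2 * n).factorial ≤ (2 ^ n * n.factorial) ^ 2 := by
    rw [← h1]
    calc (2 * n).choose n * n.factorial * n.factorial
        ≤ 2 ^ (2 * n) * n.factorial * n.factorial := by gcongr
      _ = (2 ^ n * n.factorial) ^ 2 := by ring
  exact_mod_cast h4

/-- The size of the average of the `y`-Euler derivative of a homogeneous polynomial of finite
range. -/
theorem kg_bound {N : ℕ} {a β a0 β0 K1 : ℝ} (hN : 0 < N) (ha : 0 < a) (hβ : 0 < β)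
    (haa : a < a0) (ha0 : a0 < 1 / 2) (hββ : β0 < β) (hK1 : 0 < K1)
    (hMom : MomEstimate a0 β0 K1) (hD : 1 ≤ Dc K1 a β)
    {f : Pol N} {n m : ℕ} (hf : f.IsHomogeneous (2 * n)) (hr : RangeLE m f) :
    |kgE N ha hβ (kgY f)| ≤
      Real.sqrt ((2 * K1) ^ ((1 : ℝ) + 4 * a0)) / (1 - 2 * a) ^ (n + 1) * Dc K1 a β ^ (1 + m) *
        (4 / β) ^ n * (n.factorial : ℝ) * (2 * n) * pnorm f := by
  have h12 : 0 < 1 - 2 * a := by linarith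
  have hYh : (kgY f).IsHomogeneous (2 * n) := fun d hd => hf (kgY_supp hd)
  have hm := hMom N a β n (min m (N - 1)) (kgY f) ha haa hββ hYh
    (by
      intro d hd l hl
      rw [mem_support_iff] at hd
      have h1 := hr d (mem_support_iff.2 (kgY_supp hd)) l hl
      have h2 := l.2
      omega)
    (by omega)
  have hA : A2c a ^ (4 + 4 * n) = ((1 - 2 * a) ^ (n + 1)) ^ 2 := by
    unfold A2c
    have : 4 + 4 * n = 2 * (2 * (n + 1)) := by ring
    rw [this, pow_mul, Real.sq_sqrt h12.le]
    ring
  have hpn := kgY_pnorm hf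
  have hpn0 := kg_pnorm_nonneg (kgY f)
  have hpf0 := kg_pnorm_nonneg f
  have hD0 : 0 ≤ Dc K1 a β := by linarith
  have hDp : Dc K1 a β ^ (2 + min m (N - 1)) ≤ (Dc K1 a β ^ (1 + m)) ^ 2 := by
    rw [← pow_mul]
    exact pow_le_pow_right₀ hD (by omega)
  have hK : 0 ≤ (2 * K1) ^ ((1 : ℝ) + 4 * a0) := by positivity
  apply abs_le_of_sq_le_sq
  · refine (kgE_sq_le ha hβ _).trans (hm.trans ?_)
    rw [hA]
    calc (2 * K1) ^ ((1 : ℝ) + 4 * a0) / ((1 - 2 * a) ^ (n + 1)) ^ 2 *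
          Dc K1 a β ^ (2 + min m (N - 1)) * (2 / β) ^ (2 * n) * ((2 * n).factorial : ℝ) *
          pnorm (kgY f) ^ 2
        ≤ (2 * K1) ^ ((1 : ℝ) + 4 * a0) / ((1 - 2 * a) ^ (n + 1)) ^ 2 *
          (Dc K1 a β ^ (1 + m)) ^ 2 * (2 / β) ^ (2 * n) * (2 ^ n * (n.factorial : ℝ)) ^ 2 *
          (((2 * n : ℕ) : ℝ) * pnorm f) ^ 2 := by
          gcongr
          exact kg_fact n
      _ = (Real.sqrt ((2 * K1) ^ ((1 : ℝ) + 4 * a0))) ^ 2 / ((1 - 2 * a) ^ (n + 1)) ^ 2 *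
          (Dc K1 a β ^ (1 + m)) ^ 2 * (2 / β) ^ (2 * n) * (2 ^ n * (n.factorial : ℝ)) ^ 2 *
          (((2 * n : ℕ) : ℝ) * pnorm f) ^ 2 := by rw [Real.sq_sqrt hK]
      _ = _ := by
          have : (4 / β : ℝ) ^ n = (2 / β) ^ n * 2 ^ n := by
            rw [← mul_pow]; congr 1; ring
          rw [this]
          push_cast
          generalize (1 - 2 * a) ^ (n + 1) = w
          ring
  · positivity

/-- Sum over a decomposition. -/
theorem kg_decomp {N : ℕ} {a β a0 β0 K1 : ℝ} (hN : 0 < N) (ha : 0 < a) (hβ : 0 < β)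
    (haa : a < a0) (ha0 : a0 < 1 / 2) (hββ : β0 < β) (hK1 : 0 < K1)
    (hMom : MomEstimate a0 β0 K1) (hD : 1 ≤ Dc K1 a β)
    {f : Pol N} {n : ℕ} (hf : f.IsHomogeneous (2 * n)) (S : Finset ℕ) (F : ℕ → Pol N)
    (hsum : f = ∑ m ∈ S, F m) (hr : ∀ m, RangeLE m (F m)) (C q : ℝ)
    (hF : ∀ m, pnorm (F m) ≤ C * q ^ m) :
    |kgE N ha hβ (kgY f)| ≤
      Real.sqrt ((2 * K1) ^ ((1 : ℝ) + 4 * a0)) / (1 - 2 * a) ^ (n + 1) * Dc K1 a β *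
        (4 / β) ^ n * (n.factorial : ℝ) * (2 * n) * C * ∑ m ∈ S, (Dc K1 a β * q) ^ m := by
  have h12 : 0 < 1 - 2 * a := by linarith
  have hD0 : 0 ≤ Dc K1 a β := by linarith
  have hf' : f = ∑ m ∈ S, homogeneousComponent (2 * n) (F m) := by
    rw [← map_sum, ← hsum, homogeneousComponent_of_mem ((mem_homogeneousSubmodule _ _).2 hf), if_pos rfl]
  have hb : ∀ m, |kgE N ha hβ (kgY (homogeneousComponent (2 * n) (F m)))| ≤
      Real.sqrt ((2 * K1) ^ ((1 : ℝ) + 4 * a0)) / (1 - 2 * a) ^ (n + 1) * Dc K1 a β *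
        (4 / β) ^ n * (n.factorial : ℝ) * (2 * n) * C * (Dc K1 a β * q) ^ m := by
    intro m
    have hrm : RangeLE m (homogeneousComponent (2 * n) (F m)) := by
      intro d hd
      apply hr m d
      rw [mem_support_iff, coeff_homogeneousComponent] at hd
      rw [mem_support_iff]
      intro h0
      simp [h0] at hd
    have h1 := kg_bound hN ha hβ haa ha0 hββ hK1 hMom hD
      (homogeneousComponent_isHomogeneous (2 * n) (F m)) hrm
    have h2 : pnorm (homogeneousComponent (2 * n) (F m)) ≤ C * q ^ m := by
      refine le_trans ?_ (hF m)
      have := kg_pnorm_le (F m) (homogeneousComponent (2 * n) (F m)) 1 (fun d => by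
        rw [coeff_homogeneousComponent]
        split_ifs <;> simp)
      linarith
    refine h1.trans ?_
    calc _ ≤ Real.sqrt ((2 * K1) ^ ((1 : ℝ) + 4 * a0)) / (1 - 2 * a) ^ (n + 1) *
        Dc K1 a β ^ (1 + m) * (4 / β) ^ n * (n.factorial : ℝ) * (2 * n) * (C * q ^ m) := by
          gcongr
      _ = _ := by rw [mul_pow]; ring
  conv_lhs => rw [hf', kgY_sum, map_sum]
  refine (Finset.abs_sum_le_sum_abs _ _).trans ?_
  rw [Finset.mul_sum]
  exact Finset.sum_le_sum fun m _ => hb m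

theorem kg_geom {x : ℝ} (h0 : 0 ≤ x) (h1 : x ≤ 1 / 2) (n : ℕ) :
    ∑ m ∈ Finset.range n, x ^ m ≤ 2 := by
  have h : ∀ n : ℕ, ∑ m ∈ Finset.range n, x ^ m ≤ 2 * (1 - (1 / 2) ^ n) := by
    intro n
    induction n with
    | zero => simp
    | succ n ih =>
      rw [Finset.sum_range_succ]
      have := pow_le_pow_left₀ h0 h1 n
      rw [pow_succ]
      linarith
  have h2 : (0 : ℝ) ≤ (1 / 2) ^ n := by positivity
  linarith [h n]

theorem kg_stirling (n : ℕ) : ((n + 1).factorial : ℝ) * Real.exp (n + 1 : ℕ) ≤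
    Real.exp 1 * ((n + 1 : ℕ) : ℝ) ^ (n + 2) := by
  induction n with
  | zero => simp
  | succ n ih =>
    have hk : Real.exp 1 * ((n + 1 : ℕ) : ℝ) ^ (n + 2) ≤ ((n + 2 : ℕ) : ℝ) ^ (n + 2) := by
      have h1 : ((n + 1 : ℕ) : ℝ) / ((n + 2 : ℕ) : ℝ) ≤ Real.exp (-(1 / ((n + 2 : ℕ) : ℝ))) := by
        have := Real.add_one_le_exp (-(1 / ((n + 2 : ℕ) : ℝ)))
        refine le_trans (le_of_eq ?_) this
        push_cast
        field_simp
        ring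
      have h2 := pow_le_pow_left₀ (by positivity) h1 (n + 2)
      rw [← Real.exp_nat_mul] at h2
      have h3 : ((n + 2 : ℕ) : ℝ) * -(1 / ((n + 2 : ℕ) : ℝ)) = -1 := by
        have : ((n + 2 : ℕ) : ℝ) ≠ 0 := by positivity
        field_simp
      rw [h3, div_pow, div_le_iff₀ (by positivity), Real.exp_neg, inv_mul_eq_div,
        le_div_iff₀ (Real.exp_pos 1)] at h2
      linarith
    have e1 : Real.exp ((n + 1 + 1 : ℕ) : ℝ) = Real.exp ((n + 1 : ℕ) : ℝ) * Real.exp 1 := by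
      rw [← Real.exp_add]; push_cast; rfl
    rw [Nat.factorial_succ, e1]
    push_cast at ih hk ⊢
    calc ((n : ℝ) + 1 + 1) * ((n + 1).factorial : ℝ) * (Real.exp (n + 1) * Real.exp 1)
        = ((n : ℝ) + 2) * Real.exp 1 * (((n + 1).factorial : ℝ) * Real.exp (n + 1)) := by ring
      _ ≤ ((n : ℝ) + 2) * Real.exp 1 * (Real.exp 1 * ((n : ℝ) + 1) ^ (n + 2)) := by gcongr
      _ ≤ ((n : ℝ) + 2) * Real.exp 1 * (((n : ℝ) + 2) ^ (n + 2)) := by gcongr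
      _ = Real.exp 1 * ((n : ℝ) + 1 + 1) ^ (n + 1 + 2) := by ring

/-- The bounded sum over the perturbation orders. -/
noncomputable def kgS : ℝ := ∑' n : ℕ, 8 * ((n : ℝ) ^ 4 * (1 / 2 : ℝ) ^ n)

theorem kgS_summable : Summable (fun n : ℕ => 8 * ((n : ℝ) ^ 4 * (1 / 2 : ℝ) ^ n)) :=
  (summable_pow_mul_geometric_of_norm_lt_one (R := ℝ) 4 (r := 1 / 2)
    (by norm_num)).mul_left 8

theorem kgS_nonneg : 0 ≤ kgS := tsum_nonneg fun n => by positivity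

theorem kg_term (r k : ℕ) (hk : k < r) (ρ : ℝ) (h0 : 0 ≤ ρ)
    (hρ : ρ ≤ Real.exp 1 / 2 / ((r : ℝ) + 1)) :
    ((k + 2).factorial : ℝ) * (2 * ((k + 2 : ℕ) : ℝ)) * ρ ^ k ≤
      8 * (((k + 2 : ℕ) : ℝ) ^ 4 * (1 / 2 : ℝ) ^ (k + 2)) := by
  have hkr : ((k + 2 : ℕ) : ℝ) ≤ (r : ℝ) + 1 := by
    have : k + 2 ≤ r + 1 := by omega
    exact_mod_cast this
  set n : ℝ := ((k + 2 : ℕ) : ℝ) with hn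
  have hn0 : 0 < n := by rw [hn]; positivity
  have h1 : ρ ≤ Real.exp 1 / 2 / n := hρ.trans (by gcongr)
  have h2 : ρ ^ k ≤ (Real.exp 1 / 2 / n) ^ k := pow_le_pow_left₀ h0 h1 k
  have hs := kg_stirling (k + 1)
  have hs' : ((k + 2).factorial : ℝ) * (Real.exp 1) ^ (k + 2) ≤ Real.exp 1 * n ^ (k + 3) := by
    have : Real.exp ((k + 2 : ℕ) : ℝ) = Real.exp 1 ^ (k + 2) := by
      rw [← Real.exp_nat_mul, mul_one]
    rw [← this]
    exact hs
  have he : 1 ≤ Real.exp 1 := Real.one_le_exp (by norm_num)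
  have hs2 : ((k + 2).factorial : ℝ) * (Real.exp 1) ^ k ≤ n ^ (k + 3) := by
    have h3 : Real.exp 1 * (((k + 2).factorial : ℝ) * (Real.exp 1) ^ k) ≤ Real.exp 1 * n ^ (k + 3) := by
      refine le_trans ?_ hs'
      rw [pow_add]
      have : (0 : ℝ) ≤ ((k + 2).factorial : ℝ) * (Real.exp 1) ^ k := by positivity
      nlinarith [mul_nonneg (mul_nonneg this (sub_nonneg.2 he)) (Real.exp_pos 1).le]
    exact le_of_mul_le_mul_left h3 (by positivity)
  calc ((k + 2).factorial : ℝ) * (2 * n) * ρ ^ k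
      ≤ ((k + 2).factorial : ℝ) * (2 * n) * (Real.exp 1 / 2 / n) ^ k := by gcongr
    _ = (((k + 2).factorial : ℝ) * (Real.exp 1) ^ k) * (2 * n) / (2 ^ k * n ^ k) := by
        rw [div_pow, div_pow]; field_simp
    _ ≤ n ^ (k + 3) * (2 * n) / (2 ^ k * n ^ k) := by gcongr
    _ = 8 * (n ^ 4 * (1 / 2 : ℝ) ^ (k + 2)) := by
        rw [pow_add, pow_add, one_div, inv_pow]
        field_simp
        ring

theorem kg_series (r : ℕ) (ρ : ℝ) (h0 : 0 ≤ ρ) (hρ : ρ ≤ Real.exp 1 / 2 / ((r : ℝ) + 1)) :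
    ∑ k ∈ Finset.range r, ((k + 2).factorial : ℝ) * (2 * ((k + 2 : ℕ) : ℝ)) * ρ ^ k ≤ kgS := by
  calc _ ≤ ∑ k ∈ Finset.range r, 8 * (((k + 2 : ℕ) : ℝ) ^ 4 * (1 / 2 : ℝ) ^ (k + 2)) :=
        Finset.sum_le_sum fun k hk => kg_term r k (Finset.mem_range.1 hk) ρ h0 hρ
    _ = ∑ n ∈ (Finset.range r).map (addRightEmbedding 2),
          8 * ((n : ℝ) ^ 4 * (1 / 2 : ℝ) ^ n) := by
        rw [Finset.sum_map]; rfl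
    _ ≤ kgS := kgS_summable.sum_le_tsum _ fun n _ => by positivity

theorem kgY_C_mul {N : ℕ} (c : ℝ) (p : Pol N) : kgY (C c * p) = C c * kgY p := by
  ext d
  simp only [coeff_C_mul, kgY_coeff]
  ring

/-- The leading part of the seed. -/
theorem kgE_main {N : ℕ} {a β : ℝ} (ha : 0 < a) (hβ : 0 < β) (Ω : ℝ) (j : Fin N) :
    kgE N ha hβ (kgY (C (Ω / 2) * ((X (Sum.inl j)) ^ 2 + (X (Sum.inr j)) ^ 2))) = Ω / β := by
  rw [kgY_C_mul, kgY_add, kgY_xsq, kgY_ysq, zero_add, ← smul_eq_C_mul, map_smul, map_smul,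
    kgE_ysq_one, smul_eq_mul, smul_eq_mul]
  ring

theorem kg_Dc {K1 a β : ℝ} (hK1 : 2 < K1) (ha : 0 < a) (ha' : a < 1 / 2)
    (hβ : 0 < β) (hβ2 : 3 / 2 < β ^ 2) : 1 ≤ Dc K1 a β ∧ Dc K1 a β ≤ 4 * K1 := by
  have hb : 3 / (4 * β ^ 2) ≤ 1 / 2 := by
    rw [div_le_iff₀ (by positivity)]
    linarith
  have hb0 : 0 < 3 / (4 * β ^ 2) := by positivity
  have hs1 : 1 ≤ Real.sqrt (1 + 4 * a) := Real.one_le_sqrt.2 (by linarith)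
  have hs2 : Real.sqrt (1 + 4 * a) ≤ 2 := by
    rw [Real.sqrt_le_left (by norm_num)]
    linarith
  unfold Dc
  constructor
  · rw [le_div_iff₀ (by linarith)]
    nlinarith
  · rw [div_le_iff₀ (by linarith)]
    nlinarith

theorem kg_s0 {N : ℕ} {a β a0 β0 K1 Ω : ℝ} (hN : 0 < N) (ha : 0 < a) (hβ : 0 < β)
    (haa : a < a0) (ha0 : a0 < 1 / 2) (hββ : β0 < β) (hK1 : 2 < K1) (hΩ : 0 < Ω)
    (hMom : MomEstimate a0 β0 K1) (hD : 1 ≤ Dc K1 a β) (hD4 : Dc K1 a β ≤ 4 * K1)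
    (hμ : muKG a < (1 - 2 * a0) ^ 2 /
      (4096 * K1 ^ 2 * (Real.sqrt ((2 * K1) ^ ((1 : ℝ) + 4 * a0)) + 1)))
    (p : Pol N) (hp : p.IsHomogeneous 2) (F : ℕ → Pol N) (hF : IsDecomp p F)
    (hF0 : F 0 = MvPolynomial.C (Ω / 2) *
            ((X (Sum.inl (⟨0, hN⟩ : Fin N))) ^ 2 + (X (Sum.inr (⟨0, hN⟩ : Fin N))) ^ 2))
    (hdec : Decay (Ω / (1 - 2 * muKG a)) (sigma0 a) F) :
    |kgE N ha hβ (kgY p) - Ω / β| ≤ Ω / (4 * β) := by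
  have ha0p : 0 < a0 := ha.trans haa
  have hμ0 : 0 < muKG a := by unfold muKG; positivity
  have hw : 0 < 1 - 2 * a0 := by linarith
  have hw1 : 1 - 2 * a0 ≤ 1 := by linarith
  have hκ : 0 ≤ Real.sqrt ((2 * K1) ^ ((1 : ℝ) + 4 * a0)) := Real.sqrt_nonneg _
  have hp' : p = F 0 + ∑ m ∈ Finset.Ico 1 (N + 1), F m := by
    rw [hF.1, Finset.range_eq_Ico, Finset.sum_eq_sum_Ico_succ_bot (by omega)]
  have hF0h : (F 0).IsHomogeneous 2 := by
    rw [hF0]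
    have := (isHomogeneous_C (Fin N ⊕ Fin N) (Ω / 2)).mul
      (((isHomogeneous_X ℝ (Sum.inl (⟨0, hN⟩ : Fin N) : Fin N ⊕ Fin N)).pow 2).add
        ((isHomogeneous_X ℝ (Sum.inr (⟨0, hN⟩ : Fin N) : Fin N ⊕ Fin N)).pow 2))
    simpa using this
  have hgh : (∑ m ∈ Finset.Ico 1 (N + 1), F m).IsHomogeneous (2 * 1) := by
    have : (∑ m ∈ Finset.Ico 1 (N + 1), F m) = p - F 0 := by rw [hp']; ring
    rw [this]
    exact hp.sub hF0h
  have hpn : ∀ m, pnorm (F m) ≤ Ω / (1 - 2 * muKG a) * (2 * muKG a) ^ m := by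
    intro m
    refine (hdec m).trans (le_of_eq ?_)
    congr 1
    unfold sigma0
    rw [neg_neg, mul_comm, Real.exp_nat_mul, Real.exp_log (by positivity)]
  have hb := kg_decomp hN ha hβ haa ha0 hββ (by linarith) hMom hD hgh _ F rfl hF.2 _ _ hpn
  have hE : kgE N ha hβ (kgY p) - Ω / β =
      kgE N ha hβ (kgY (∑ m ∈ Finset.Ico 1 (N + 1), F m)) := by
    conv_lhs => rw [hp', kgY_add, map_add, hF0, kgE_main]
    ring
  rw [hE]
  refine hb.trans ?_
  generalize Real.sqrt ((2 * K1) ^ ((1 : ℝ) + 4 * a0)) = κ at hκ hμ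
  generalize hDD : Dc K1 a β = D at hD hD4
  rw [lt_div_iff₀ (by positivity)] at hμ
  have hC : Ω / (1 - 2 * muKG a) ≤ 2 * Ω := by
    have : 1 - 2 * muKG a = 1 / (1 + 2 * a) := by
      unfold muKG; field_simp; ring
    rw [this]
    field_simp
    nlinarith
  have hC0 : 0 ≤ Ω / (1 - 2 * muKG a) := by
    have : 1 - 2 * muKG a = 1 / (1 + 2 * a) := by
      unfold muKG; field_simp; ring
    rw [this]
    positivity
  generalize muKG a = μ at hμ hμ0 hC hC0
  have hw2 : (1 - 2 * a0) ^ 2 ≤ 1 := by nlinarith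
  have hx : D * (2 * μ) ≤ 1 / 2 := by
    have h1 : D * μ ≤ 4 * K1 * μ := by gcongr
    have h2 : 0 ≤ μ * K1 ^ 2 * κ := by positivity
    have h3 : μ * K1 * 2 ≤ μ * K1 ^ 2 := by
      have : 0 < μ * K1 := by positivity
      nlinarith
    nlinarith
  have hx0 : 0 ≤ D * (2 * μ) := by positivity
  have hsum : ∑ m ∈ Finset.Ico 1 (N + 1), (D * (2 * μ)) ^ m ≤ D * (2 * μ) * 2 := by
    rw [Finset.sum_Ico_eq_sum_range]
    simp only [pow_add, pow_one]
    rw [← Finset.mul_sum]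
    gcongr
    exact kg_geom hx0 hx _
  have hsum0 : 0 ≤ ∑ m ∈ Finset.Ico 1 (N + 1), (D * (2 * μ)) ^ m :=
    Finset.sum_nonneg fun _ _ => by positivity
  have hv : 1 - 2 * a0 ≤ 1 - 2 * a := by linarith
  have hD0 : 0 ≤ D := by linarith
  calc κ / (1 - 2 * a) ^ (1 + 1) * D * (4 / β) ^ 1 * ((1 : ℕ).factorial : ℝ) * (2 * ((1 : ℕ) : ℝ)) *
        (Ω / (1 - 2 * μ)) * ∑ m ∈ Finset.Ico 1 (N + 1), (D * (2 * μ)) ^ m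
      ≤ κ / (1 - 2 * a0) ^ (1 + 1) * D * (4 / β) ^ 1 * ((1 : ℕ).factorial : ℝ) *
        (2 * ((1 : ℕ) : ℝ)) * (2 * Ω) * (D * (2 * μ) * 2) := by gcongr
    _ = (64 * κ * μ * D ^ 2 / (1 - 2 * a0) ^ 2) * (Ω / β) := by
        simp only [Nat.factorial_one, Nat.cast_one, pow_one]
        ring
    _ ≤ (1 / 4) * (Ω / β) := by
        refine mul_le_mul_of_nonneg_right ?_ (by positivity)
        rw [div_le_iff₀ (by positivity)]
        have h5 : 64 * κ * μ * D ^ 2 ≤ 64 * κ * μ * (4 * K1) ^ 2 := by gcongr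
        have h6 : 0 ≤ μ * K1 ^ 2 := by positivity
        nlinarith
    _ = Ω / (4 * β) := by field_simp

theorem kg_rho {a Ct C1 Ω β Fr : ℝ} {r : ℕ} (hr : 0 < r) (ha' : a < 1 / 2)
    (hΩ : 0 < Ω) (hC1 : 0 < C1) (hCt : 0 ≤ Ct) (hβ : 0 < β) (hf : muflat a < 1)
    (hFr : Fr ≤ 48 * (r : ℝ) ^ 2 * C1 / (Ω * (1 - muflat a ^ 2) * (1 - muflat a)))
    (hb : 6 * Real.exp Ct * betaCirc a Ct C1 Ω * (r : ℝ) ^ 2 * ((r : ℝ) + 1) < β) :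
    4 * Real.exp Ct * Fr / (β * (1 - 2 * a)) ≤ Real.exp 1 / 2 / ((r : ℝ) + 1) := by
  have hf0 : 0 < muflat a := Real.exp_pos _
  have hv : 0 < 1 - 2 * a := by linarith
  have hA : A2c a ^ 2 = 1 - 2 * a := Real.sq_sqrt hv.le
  unfold betaCirc at hb
  rw [hA, Real.exp_sub] at hb
  have h1 : 0 < 1 - muflat a := by linarith
  have h2 : 0 < 1 - muflat a ^ 2 := by nlinarith
  generalize 1 - muflat a = p1 at *
  generalize 1 - muflat a ^ 2 = p2 at *
  generalize 1 - 2 * a = v at *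
  have hE1 : 1 ≤ Real.exp Ct := Real.one_le_exp hCt
  have he : 0 < Real.exp 1 := Real.exp_pos 1
  generalize Real.exp Ct = E at *
  generalize Real.exp 1 = e at *
  have hr1 : (0 : ℝ) < r := by exact_mod_cast hr
  generalize (r : ℝ) = R at *
  have hE0 : 0 < E := by linarith
  have hQ : 0 < C1 / (p2 * p1 * v * Ω) := by positivity
  have hb' : 384 * E ^ 2 * (C1 / (p2 * p1 * v * Ω)) * R ^ 2 * (R + 1) ≤ e * β := by
    have h3 := mul_le_mul_of_nonneg_left hb.le he.le
    refine le_trans (le_of_eq ?_) h3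
    field_simp
    norm_num
  have hFr' : Fr / v ≤ 48 * R ^ 2 * (C1 / (p2 * p1 * v * Ω)) := by
    calc Fr / v ≤ (48 * R ^ 2 * C1 / (Ω * p2 * p1)) / v := by gcongr
      _ = _ := by field_simp
  generalize C1 / (p2 * p1 * v * Ω) = Q at *
  have e1 : 4 * E * Fr / (β * v) = 4 * E * (Fr / v) / β := by field_simp
  rw [e1, div_div, div_le_div_iff₀ hβ (by positivity)]
  have h4 : 4 * E * (Fr / v) * (2 * (R + 1)) ≤ 4 * E * (48 * R ^ 2 * Q) * (2 * (R + 1)) := by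
    gcongr
  have h5 : 0 ≤ 384 * E * Q * R ^ 2 * (R + 1) := by positivity
  nlinarith [mul_nonneg h5 (sub_nonneg.2 hE1)]

theorem kg_s1 {N : ℕ} {a β a0 β0 K1 Ω C1 Ct Fr : ℝ} {r : ℕ} (hN : 0 < N) (ha : 0 < a) (hβ : 0 < β)
    (haa : a < a0) (ha0 : a0 < 1 / 2) (hββ : β0 < β) (hK1 : 2 < K1) (hΩ : 0 < Ω) (hC1 : 0 < C1)
    (hMom : MomEstimate a0 β0 K1) (hD : 1 ≤ Dc K1 a β) (hD4 : Dc K1 a β ≤ 4 * K1)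
    (hflat : Dc K1 a β ^ 2 * muflat a ≤ 1 / 2) (hFr0 : 0 ≤ Fr)
    (hρ : 4 * Real.exp Ct * Fr / (β * (1 - 2 * a)) ≤ Real.exp 1 / 2 / ((r : ℝ) + 1))
    (hβ3 : 512 * Real.sqrt ((2 * K1) ^ ((1 : ℝ) + 4 * a0)) * K1 * C1 * Real.exp Ct ^ 2 * kgS /
      ((1 - 2 * a0) ^ 3 * Ω) ≤ β)
    (φ : ℕ → Pol N) (hh : ∀ s : ℕ, s ≤ r → (φ s).IsHomogeneous (2 * s + 2))
    (hs : ∀ s : ℕ, 1 ≤ s → s ≤ r →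
          SeedClassD (Real.exp (((s : ℝ) + 1) * Ct) * Fr ^ (s - 1) * C1)
            (((s : ℝ) * (sigma0 a / 4) + ((r : ℝ) - (s : ℝ)) * (sigma0 a / 2)) / (r : ℝ))
            (φ s)) :
    |kgE N ha hβ (kgY (∑ k ∈ Finset.range r, φ (k + 1)))| ≤ Ω / (4 * β) := by
  have hw : 0 < 1 - 2 * a0 := by linarith
  have hv : 0 < 1 - 2 * a := by linarith
  have hvw : 1 - 2 * a0 ≤ 1 - 2 * a := by linarith
  have hf0 : 0 < muflat a := Real.exp_pos _
  have hx : Dc K1 a β * muflat a ≤ 1 / 2 := by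
    have : 0 ≤ Dc K1 a β * muflat a := by positivity
    nlinarith
  have hx0 : 0 ≤ Dc K1 a β * muflat a := by positivity
  have hσ : 0 ≤ sigma0 a := by
    unfold sigma0
    have h1 : 0 < 2 * muKG a := by unfold muKG; positivity
    have h2 : 2 * muKG a ≤ 1 := by
      unfold muKG
      rw [← mul_div_assoc, div_le_one (by positivity)]
      linarith
    have := Real.log_nonpos h1.le h2
    linarith
  set κ := Real.sqrt ((2 * K1) ^ ((1 : ℝ) + 4 * a0)) with hκd
  have hκ : 0 ≤ κ := Real.sqrt_nonneg _
  set D := Dc K1 a β with hDdef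
  set ρ := 4 * Real.exp Ct * Fr / (β * (1 - 2 * a)) with hρd
  have hρ0 : 0 ≤ ρ := by positivity
  have hterm : ∀ k ∈ Finset.range r, |kgE N ha hβ (kgY (φ (k + 1)))| ≤
      (32 * κ * D * C1 * Real.exp Ct ^ 2 / (β ^ 2 * (1 - 2 * a) ^ 3)) *
        (((k + 2).factorial : ℝ) * (2 * ((k + 2 : ℕ) : ℝ)) * ρ ^ k) := by
    intro k hk
    have hkr := Finset.mem_range.1 hk
    have hr0 : (0 : ℝ) < r := by
      have : 0 < r := by omega
      exact_mod_cast this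
    obtain ⟨F, hF, hdec⟩ := hs (k + 1) (by omega) (by omega)
    have hhom : (φ (k + 1)).IsHomogeneous (2 * (k + 2)) := hh (k + 1) (by omega)
    have hkr' : ((k + 1 : ℕ) : ℝ) ≤ r := by exact_mod_cast hkr
    have hpn : ∀ m, pnorm (F m) ≤
        (Real.exp ((((k + 1 : ℕ) : ℝ) + 1) * Ct) * Fr ^ (k + 1 - 1) * C1) * (muflat a) ^ m := by
      intro m
      refine (hdec m).trans ?_
      gcongr
      unfold muflat
      rw [← Real.exp_nat_mul]
      apply Real.exp_le_exp.2
      have hσs : sigma0 a / 4 ≤ (((k + 1 : ℕ) : ℝ) * (sigma0 a / 4) +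
          ((r : ℝ) - ((k + 1 : ℕ) : ℝ)) * (sigma0 a / 2)) / (r : ℝ) := by
        rw [le_div_iff₀ hr0]
        nlinarith
      have hm0 : (0 : ℝ) ≤ m := Nat.cast_nonneg m
      nlinarith
    have hb := kg_decomp hN ha hβ haa ha0 hββ (by linarith) hMom hD hhom _ F hF.1 hF.2 _ _ hpn
    refine hb.trans ?_
    have hg := kg_geom hx0 hx (N + 1)
    have hexp : Real.exp ((((k + 1 : ℕ) : ℝ) + 1) * Ct) = Real.exp Ct ^ (k + 2) := by
      rw [← Real.exp_nat_mul]; push_cast; congr 1; ring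
    rw [hexp, Nat.add_sub_cancel]
    calc _ ≤ κ / (1 - 2 * a) ^ (k + 2 + 1) * D * (4 / β) ^ (k + 2) * ((k + 2).factorial : ℝ) *
          (2 * ((k + 2 : ℕ) : ℝ)) * (Real.exp Ct ^ (k + 2) * Fr ^ k * C1) * 2 := by
            gcongr
      _ = _ := by
          rw [hρd]
          simp only [div_pow, mul_pow, pow_add]
          field_simp
          ring
  rw [kgY_sum, map_sum]
  refine (Finset.abs_sum_le_sum_abs _ _).trans ((Finset.sum_le_sum hterm).trans ?_)
  rw [← Finset.mul_sum]
  have hS := kg_series r ρ hρ0 hρ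
  have hS0 := kgS_nonneg
  calc _ ≤ (32 * κ * (4 * K1) * C1 * Real.exp Ct ^ 2 / (β ^ 2 * (1 - 2 * a0) ^ 3)) * kgS := by
        gcongr
    _ = (512 * κ * K1 * C1 * Real.exp Ct ^ 2 * kgS / ((1 - 2 * a0) ^ 3 * Ω)) *
          (Ω / (4 * β ^ 2)) := by
        field_simp
        ring
    _ ≤ β * (Ω / (4 * β ^ 2)) := by gcongr
    _ = Ω / (4 * β) := by field_simp

/-- lower bound of `σ²[Φ]`: there exists `β3 > 0` such that, with
`μ2` and `β4` the thresholds of the seed-variance lemma, whenever `μ < μ2`,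
`D²μ♭ ≤ 1/2` and `β > max{β0, β3, β4, 6e^{C̃}β°r²(r+1), √(3/2)}`, the truncated
adiabatic invariant `Φ = Φ^{(r)} = φ^⊕` (with `φ = Σ_{s=0}^r φ_s`, `φ_s` homogeneous
of degree `2s+2`, `φ_0` of class `D(Ω/(1−2μ), σ0)` with `φ_0^{(0)} = (Ω/2)(x_0²+y_0²)`
and `φ_s` of class `D(e^{(s+1)C̃} F_r^{s−1} C1, σ_s)` for `1 ≤ s ≤ r`) satisfies
`σ²[Φ] ≥ (N/β²)·Ω²/10`. -/
theorem stmt15 (a0 β0 K1 Ω C1 Ct : ℝ)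
    (ha0 : 0 < a0) (ha0' : a0 < 1 / 2) (hβ0 : 0 < β0) (hK1 : 2 < K1)
    (hΩ : 0 < Ω) (hC1 : 0 < C1) (hCt : 0 ≤ Ct)
    (hCorr : CorrEstimate a0 β0 K1) (hMom : MomEstimate a0 β0 K1) :
    ∃ μ2 β4 β3 : ℝ, 0 < μ2 ∧ 0 < β4 ∧ 0 < β3 ∧
      ∀ (N : ℕ) (hN : 0 < N) (a β : ℝ) (r : ℕ) (Fr : ℝ) (φ : ℕ → Pol N),
        0 < a → a < a0 →
        -- `F_r` is the constant of the perturbative construction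
        24 * (r : ℝ) ^ 2 * C1 / (Ω * (1 - muflat a ^ 2) * (1 - muflat a)) ≤ Fr →
        Fr ≤ 48 * (r : ℝ) ^ 2 * C1 / (Ω * (1 - muflat a ^ 2) * (1 - muflat a)) →
        0 < r →
        -- structure of the truncated adiabatic invariant `Φ^{(r)}`
        (∀ s : ℕ, s ≤ r → (φ s).IsHomogeneous (2 * s + 2)) →
        (∃ F : ℕ → Pol N, IsDecomp (φ 0) F ∧
          F 0 = MvPolynomial.C (Ω / 2) *
            ((X (Sum.inl (⟨0, hN⟩ : Fin N))) ^ 2 + (X (Sum.inr (⟨0, hN⟩ : Fin N))) ^ 2) ∧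
          Decay (Ω / (1 - 2 * muKG a)) (sigma0 a) F) →
        (∀ s : ℕ, 1 ≤ s → s ≤ r →
          SeedClassD (Real.exp (((s : ℝ) + 1) * Ct) * Fr ^ (s - 1) * C1)
            (((s : ℝ) * (sigma0 a / 4) + ((r : ℝ) - (s : ℝ)) * (sigma0 a / 2)) / (r : ℝ))
            (φ s)) →
        -- thresholds
        muKG a < μ2 →
        Dc K1 a β ^ 2 * muflat a ≤ 1 / 2 →
        max (max (max β0 β3) (max β4
            (6 * Real.exp Ct * betaCirc a Ct C1 Ω * (r : ℝ) ^ 2 * ((r : ℝ) + 1))))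
          (Real.sqrt (3 / 2)) < β →
        (N : ℝ) / β ^ 2 * (Ω ^ 2 / 10) ≤
          pVar N a β (fun z =>
            MvPolynomial.eval (Sum.elim z.1 z.2)
              (oplus (∑ s ∈ Finset.range (r + 1), φ s))) := by
  have hw : 0 < 1 - 2 * a0 := by linarith
  have hS0 := kgS_nonneg
  refine ⟨(1 - 2 * a0) ^ 2 /
      (4096 * K1 ^ 2 * (Real.sqrt ((2 * K1) ^ ((1 : ℝ) + 4 * a0)) + 1)), 1,
    512 * Real.sqrt ((2 * K1) ^ ((1 : ℝ) + 4 * a0)) * K1 * C1 * Real.exp Ct ^ 2 * kgS /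
      ((1 - 2 * a0) ^ 3 * Ω) + 1, by positivity, one_pos, by positivity, ?_⟩
  intro N hN a β r Fr φ ha haa hFr1 hFr2 hr hh h0 hs hμ hflat hmax
  simp only [max_lt_iff] at hmax
  obtain ⟨⟨⟨hββ, hβ3⟩, _, hβr⟩, hβs⟩ := hmax
  have hβ : 0 < β := hβ0.trans hββ
  have hβ2 : 3 / 2 < β ^ 2 := (Real.sqrt_lt' hβ).1 hβs
  obtain ⟨hD, hD4⟩ := kg_Dc hK1 ha (haa.trans ha0') hβ hβ2
  have hf0 : 0 < muflat a := Real.exp_pos _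
  have hf1 : muflat a < 1 := by nlinarith
  have hf2 : 0 < 1 - muflat a ^ 2 := by nlinarith
  have hf3 : 0 < 1 - muflat a := by linarith
  have hFr0 : 0 ≤ Fr := le_trans (by positivity) hFr1
  have hρ := kg_rho hr (haa.trans ha0') hΩ hC1 hCt hβ hf1 hFr2 hβr
  obtain ⟨F, hF, hF0, hdec⟩ := h0
  have b0 := kg_s0 hN ha hβ haa ha0' hββ hK1 hΩ hMom hD hD4 hμ (φ 0) (hh 0 (by omega)) F hF hF0 hdec
  have b1 := kg_s1 hN ha hβ haa ha0' hββ hK1 hΩ hC1 hMom hD hD4 hflat hFr0 hρ (by linarith) φ hh hs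
  have hv := kg_var ha hβ hN (∑ s ∈ Finset.range (r + 1), φ s)
  have hpv : pVar N a β (fun z => MvPolynomial.eval (Sum.elim z.1 z.2)
      (oplus (∑ s ∈ Finset.range (r + 1), φ s))) =
      kgE N ha hβ (oplus (∑ s ∈ Finset.range (r + 1), φ s) *
        oplus (∑ s ∈ Finset.range (r + 1), φ s)) -
        (kgE N ha hβ (oplus (∑ s ∈ Finset.range (r + 1), φ s))) ^ 2 := by
    rw [kgE_apply, kgE_apply]
    unfold pVar gAvg
    simp only [map_mul, sq]
  rw [hpv]
  refine le_trans ?_ hv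
  have hE : Ω / β / 2 ≤ kgE N ha hβ (kgY (∑ s ∈ Finset.range (r + 1), φ s)) := by
    rw [Finset.sum_range_succ', kgY_add, map_add]
    have e1 : Ω / (4 * β) = Ω / β / 4 := by field_simp
    rw [e1] at b0 b1
    have c0 := (abs_le.1 b0).1
    have c1 := (abs_le.1 b1).1
    linarith
  have hΩβ : 0 < Ω / β := by positivity
  have hNr : (0 : ℝ) < N := by exact_mod_cast hN
  have e2 : (N : ℝ) / β ^ 2 * (Ω ^ 2 / 10) = N * (Ω / β) ^ 2 / 10 := by field_simp
  rw [e2]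
  have h4 : (Ω / β / 2) ^ 2 ≤ (kgE N ha hβ (kgY (∑ s ∈ Finset.range (r + 1), φ s))) ^ 2 := by
    gcongr
  have h5 := mul_le_mul_of_nonneg_left h4 hNr.le
  have h6 : 0 ≤ (N : ℝ) * (Ω / β) ^ 2 := by positivity
  nlinarith
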